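/- Let P and Q be probability densities on a measurable space with respect to a common dominating measure. Then H²(P,Q) ≥ (1/2) ∫ (P−Q)²/(P+Q), and consequently for every measurable test function T with E_P[T²] + E_Q[T²] < ∞, H²(P,Q) ≥ (1/2) · ( E_P[T] − E_Q[T] )² / ( E_P[T²] + E_Q[T²] ). -/

import Mathlib

open MeasureTheory

/-!
Pointwise, `p - q = (√p - √q) (√p + √q)` and `(√p + √q) ^ 2 ≤ 2 (p + q)`, so the triangular
discrimination `∫ (P - Q) ^ 2 / (P + Q)` is at most twice the squared Hellinger distance.
Writing `T (P - Q)` as the product of `T √(P + Q)` and `(P - Q) / √(P + Q)`, the Cauchy-Schwarz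
inequality bounds `(E_P[T] - E_Q[T]) ^ 2` by `E_P[T ^ 2] + E_Q[T ^ 2]` times the triangular
discrimination.
-/

theorem sq_sub_div_add_le_two_mul_sq_sqrt_sub_sqrt {p q : ℝ} (hp : 0 ≤ p) (hq : 0 ≤ q) :
    (p - q) ^ 2 / (p + q) ≤ 2 * (√p - √q) ^ 2 := by
  refine div_le_of_le_mul₀ (add_nonneg hp hq) (by positivity) ?_
  calc (p - q) ^ 2 = (√p - √q) ^ 2 * (√p + √q) ^ 2 := by
        rw [← mul_pow, mul_comm, ← sq_sub_sq, Real.sq_sqrt hp, Real.sq_sqrt hq]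
    _ ≤ (√p - √q) ^ 2 * (2 * (√p ^ 2 + √q ^ 2)) := by gcongr; exact add_sq_le
    _ = 2 * (√p - √q) ^ 2 * (p + q) := by rw [Real.sq_sqrt hp, Real.sq_sqrt hq]; ring

theorem sq_sqrt_sub_sqrt_le_add {p q : ℝ} (hp : 0 ≤ p) (hq : 0 ≤ q) :
    (√p - √q) ^ 2 ≤ p + q := by
  rw [sub_sq, Real.sq_sqrt hp, Real.sq_sqrt hq]
  linarith [mul_nonneg (Real.sqrt_nonneg p) (Real.sqrt_nonneg q)]

section

variable {α : Type*} [MeasurableSpace α] {ν : Measure α} {f g w P Q T : α → ℝ}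

theorem sq_integral_mul_le_of_memLp_two (hf : MemLp f 2 ν) (hg : MemLp g 2 ν) :
    (∫ x, f x * g x ∂ν) ^ 2 ≤ (∫ x, f x ^ 2 ∂ν) * ∫ x, g x ^ 2 ∂ν := by
  have inner_toLp {u v : α → ℝ} (hu : MemLp u 2 ν) (hv : MemLp v 2 ν) :
      inner ℝ (hu.toLp u) (hv.toLp v) = ∫ x, u x * v x ∂ν := by
    rw [L2.inner_def]
    refine integral_congr_ae ?_
    filter_upwards [hu.coeFn_toLp, hv.coeFn_toLp] with x hux hvx
    rw [hux, hvx, Real.inner_apply]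
  simpa only [inner_toLp, ← sq] using real_inner_mul_inner_self_le (hf.toLp f) (hg.toLp g)

theorem sq_integral_mul_le_integral_sq_mul_mul_integral_sq_div (hT : AEMeasurable T ν)
    (hf : AEMeasurable f ν) (hw : AEMeasurable w ν) (hw0 : 0 ≤ᵐ[ν] w)
    (hfw : ∀ᵐ x ∂ν, w x = 0 → f x = 0) (hTw : Integrable (fun x => T x ^ 2 * w x) ν)
    (hf_div : Integrable (fun x => f x ^ 2 / w x) ν) :
    (∫ x, T x * f x ∂ν) ^ 2 ≤ (∫ x, T x ^ 2 * w x ∂ν) * ∫ x, f x ^ 2 / w x ∂ν := by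
  have sq_left : (fun x => (T x * √(w x)) ^ 2) =ᵐ[ν] fun x => T x ^ 2 * w x := by
    filter_upwards [hw0] with x hwx
    rw [mul_pow, Real.sq_sqrt hwx]
  have sq_right : (fun x => (f x / √(w x)) ^ 2) =ᵐ[ν] fun x => f x ^ 2 / w x := by
    filter_upwards [hw0] with x hwx
    rw [div_pow, Real.sq_sqrt hwx]
  have mul_eq : (fun x => T x * √(w x) * (f x / √(w x))) =ᵐ[ν] fun x => T x * f x := by
    filter_upwards [hw0, hfw] with x hwx hfwx
    rw [mul_assoc, mul_div_cancel_of_imp' fun h => hfwx ((Real.sqrt_eq_zero hwx).1 h)]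
  have memLp_left : MemLp (fun x => T x * √(w x)) 2 ν :=
    (memLp_two_iff_integrable_sq (hT.mul hw.sqrt).aestronglyMeasurable).2
      (hTw.congr sq_left.symm)
  have memLp_right : MemLp (fun x => f x / √(w x)) 2 ν :=
    (memLp_two_iff_integrable_sq (hf.div hw.sqrt).aestronglyMeasurable).2
      (hf_div.congr sq_right.symm)
  rw [← integral_congr_ae mul_eq, ← integral_congr_ae sq_left, ← integral_congr_ae sq_right]
  exact sq_integral_mul_le_of_memLp_two memLp_left memLp_right

theorem integral_sq_mul_nonneg (hw0 : 0 ≤ᵐ[ν] w) : 0 ≤ ∫ x, T x ^ 2 * w x ∂ν :=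
  integral_nonneg_of_ae (hw0.mono fun x hwx => mul_nonneg (sq_nonneg (T x)) hwx)

theorem integrable_mul_of_integrable_sq_mul (hT : AEMeasurable T ν)
    (hw : Integrable w ν) (hTw : Integrable (fun x => T x ^ 2 * w x) ν) :
    Integrable (fun x => T x * w x) ν := by
  refine (hTw.norm.add hw.norm).mono' (hT.mul hw.aemeasurable).aestronglyMeasurable
    (.of_forall fun x => ?_)
  have abs_le_sq_add_one : |T x| ≤ T x ^ 2 + 1 := by
    nlinarith [sq_abs (T x), sq_nonneg (|T x| - 1), abs_nonneg (T x)]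
  calc ‖T x * w x‖ = |T x| * |w x| := abs_mul _ _
    _ ≤ (T x ^ 2 + 1) * |w x| := by gcongr
    _ = ‖T x ^ 2 * w x‖ + ‖w x‖ := by
      rw [norm_mul, Real.norm_of_nonneg (sq_nonneg _), Real.norm_eq_abs]; ring

/-- The squared Hellinger distance between the measures with densities `P` and `Q` with respect
to `ν`, in the normalization without a factor `1 / 2`. -/
noncomputable def hellingerSq (ν : Measure α) (P Q : α → ℝ) : ℝ :=
  ∫ x, (√(P x) - √(Q x)) ^ 2 ∂ν

/-- The triangular discrimination (Vincze–Le Cam divergence) of two densities with respect to `ν`,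
the `χ²`-type lower bound for the squared Hellinger distance. Where both densities vanish the
integrand is `0 / 0 = 0`. -/
noncomputable def triangularDiscrimination (ν : Measure α) (P Q : α → ℝ) : ℝ :=
  ∫ x, (P x - Q x) ^ 2 / (P x + Q x) ∂ν

theorem hellingerSq_nonneg : 0 ≤ hellingerSq ν P Q :=
  integral_nonneg fun _ => sq_nonneg _

theorem integrable_sq_sqrt_sub_sqrt (hP : Integrable P ν) (hQ : Integrable Q ν)
    (hP0 : 0 ≤ᵐ[ν] P) (hQ0 : 0 ≤ᵐ[ν] Q) :
    Integrable (fun x => (√(P x) - √(Q x)) ^ 2) ν := by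
  have hPm := hP.aemeasurable
  have hQm := hQ.aemeasurable
  refine (hP.add hQ).mono' (by fun_prop) ?_
  filter_upwards [hP0, hQ0] with x hPx hQx
  rw [Real.norm_of_nonneg (sq_nonneg _)]
  exact sq_sqrt_sub_sqrt_le_add hPx hQx

theorem integrable_sq_sub_div_add (hP : AEMeasurable P ν) (hQ : AEMeasurable Q ν)
    (hP0 : 0 ≤ᵐ[ν] P) (hQ0 : 0 ≤ᵐ[ν] Q)
    (hPQ : Integrable (fun x => (√(P x) - √(Q x)) ^ 2) ν) :
    Integrable (fun x => (P x - Q x) ^ 2 / (P x + Q x)) ν := by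
  have hmeas : AEMeasurable (fun x => (P x - Q x) ^ 2 / (P x + Q x)) ν := by fun_prop
  refine (hPQ.const_mul 2).mono' hmeas.aestronglyMeasurable ?_
  filter_upwards [hP0, hQ0] with x hPx hQx
  rw [Real.norm_of_nonneg (div_nonneg (sq_nonneg _) (add_nonneg hPx hQx))]
  exact sq_sub_div_add_le_two_mul_sq_sqrt_sub_sqrt hPx hQx

theorem triangularDiscrimination_le_two_mul_hellingerSq (hP0 : 0 ≤ᵐ[ν] P) (hQ0 : 0 ≤ᵐ[ν] Q)
    (hPQ : Integrable (fun x => (√(P x) - √(Q x)) ^ 2) ν) :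
    triangularDiscrimination ν P Q ≤ 2 * hellingerSq ν P Q := by
  rw [triangularDiscrimination, hellingerSq, ← integral_const_mul]
  refine integral_mono_of_nonneg ?_ (hPQ.const_mul 2) ?_
  all_goals filter_upwards [hP0, hQ0] with x hPx hQx
  · exact div_nonneg (sq_nonneg _) (add_nonneg hPx hQx)
  · exact sq_sub_div_add_le_two_mul_sq_sqrt_sub_sqrt hPx hQx

theorem sq_integral_mul_sub_le_mul_triangularDiscrimination
    (hP : AEMeasurable P ν) (hQ : AEMeasurable Q ν) (hP0 : 0 ≤ᵐ[ν] P) (hQ0 : 0 ≤ᵐ[ν] Q)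
    (hPQ : Integrable (fun x => (P x - Q x) ^ 2 / (P x + Q x)) ν) (hT : AEMeasurable T ν)
    (hTPQ : Integrable (fun x => T x ^ 2 * (P x + Q x)) ν) :
    (∫ x, T x * (P x - Q x) ∂ν) ^ 2 ≤
      (∫ x, T x ^ 2 * (P x + Q x) ∂ν) * triangularDiscrimination ν P Q := by
  have add_nonneg_ae : 0 ≤ᵐ[ν] fun x => P x + Q x := by
    filter_upwards [hP0, hQ0] with x hPx hQx using add_nonneg hPx hQx
  have sub_eq_zero_ae : ∀ᵐ x ∂ν, P x + Q x = 0 → P x - Q x = 0 := by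
    filter_upwards [hP0, hQ0] with x hPx hQx hx
    obtain ⟨hPx', hQx'⟩ := (add_eq_zero_iff_of_nonneg hPx hQx).1 hx
    rw [hPx', hQx', sub_zero]
  exact sq_integral_mul_le_integral_sq_mul_mul_integral_sq_div hT (hP.sub hQ) (hP.add hQ)
    add_nonneg_ae sub_eq_zero_ae hTPQ hPQ

theorem half_mul_sq_integral_sub_div_le_hellingerSq (hP : Integrable P ν) (hQ : Integrable Q ν)
    (hP0 : 0 ≤ᵐ[ν] P) (hQ0 : 0 ≤ᵐ[ν] Q) (hT : AEMeasurable T ν)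
    (hTP : Integrable (fun x => T x ^ 2 * P x) ν) (hTQ : Integrable (fun x => T x ^ 2 * Q x) ν) :
    (1 / 2) * ((∫ x, T x * P x ∂ν) - ∫ x, T x * Q x ∂ν) ^ 2 /
        ((∫ x, T x ^ 2 * P x ∂ν) + ∫ x, T x ^ 2 * Q x ∂ν) ≤
      hellingerSq ν P Q := by
  have hPQ := integrable_sq_sqrt_sub_sqrt hP hQ hP0 hQ0
  have hPm := hP.aemeasurable
  have hQm := hQ.aemeasurable
  have hS := add_nonneg (integral_sq_mul_nonneg (T := T) hP0) (integral_sq_mul_nonneg (T := T) hQ0)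
  have sq_le : ((∫ x, T x * P x ∂ν) - ∫ x, T x * Q x ∂ν) ^ 2 ≤
      ((∫ x, T x ^ 2 * P x ∂ν) + ∫ x, T x ^ 2 * Q x ∂ν) * triangularDiscrimination ν P Q := by
    rw [← integral_sub (integrable_mul_of_integrable_sq_mul hT hP hTP)
      (integrable_mul_of_integrable_sq_mul hT hQ hTQ), ← integral_add hTP hTQ]
    simp only [← mul_sub, ← mul_add]
    exact sq_integral_mul_sub_le_mul_triangularDiscrimination hPm hQm hP0 hQ0
      (integrable_sq_sub_div_add hPm hQm hP0 hQ0 hPQ) hT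
      (by simp only [mul_add]; exact hTP.add hTQ)
  have le_mul_hellingerSq := mul_le_mul_of_nonneg_left
    (triangularDiscrimination_le_two_mul_hellingerSq hP0 hQ0 hPQ) hS
  exact div_le_of_le_mul₀ hS hellingerSq_nonneg (by linarith)

theorem stmt17_general (hP : Integrable P ν) (hQ : Integrable Q ν)
    (hP0 : 0 ≤ᵐ[ν] P) (hQ0 : 0 ≤ᵐ[ν] Q) :
    (1 / 2) * triangularDiscrimination ν P Q ≤ hellingerSq ν P Q ∧
      ∀ T : α → ℝ, AEMeasurable T ν →
        Integrable (fun x => T x ^ 2 * P x) ν →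
        Integrable (fun x => T x ^ 2 * Q x) ν →
        (1 / 2) * ((∫ x, T x * P x ∂ν) - ∫ x, T x * Q x ∂ν) ^ 2 /
            ((∫ x, T x ^ 2 * P x ∂ν) + ∫ x, T x ^ 2 * Q x ∂ν) ≤
          hellingerSq ν P Q := by
  refine ⟨?_, fun T => half_mul_sq_integral_sub_div_le_hellingerSq hP hQ hP0 hQ0⟩
  linarith [triangularDiscrimination_le_two_mul_hellingerSq hP0 hQ0
    (integrable_sq_sqrt_sub_sqrt hP hQ hP0 hQ0)]

end

/-- the variational lower bound `eq:Hellinger-variational`. For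
probability densities `P, Q` w.r.t. a common dominating measure `ν`,
`H²(P,Q) ≥ (1/2)∫(P-Q)²/(P+Q) dν`, and consequently for every test function `T` with
`E_P[T²] + E_Q[T²] < ∞`,
`H²(P,Q) ≥ (1/2)(E_P[T] - E_Q[T])²/(E_P[T²] + E_Q[T²])`. -/
theorem stmt17 {α : Type*} [MeasurableSpace α] (ν : Measure α) (P Q : α → ℝ)
    (hPmeas : Measurable P) (hQmeas : Measurable Q)
    (hP0 : ∀ x, 0 ≤ P x) (hQ0 : ∀ x, 0 ≤ Q x)
    (hPint : Integrable P ν) (hQint : Integrable Q ν)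
    (hP1 : ∫ x, P x ∂ν = 1) (hQ1 : ∫ x, Q x ∂ν = 1) :
    (1 / 2) * ∫ x, (P x - Q x) ^ 2 / (P x + Q x) ∂ν ≤
        ∫ x, (Real.sqrt (P x) - Real.sqrt (Q x)) ^ 2 ∂ν ∧
      ∀ T : α → ℝ, Measurable T →
        Integrable (fun x => T x ^ 2 * P x) ν →
        Integrable (fun x => T x ^ 2 * Q x) ν →
        (1 / 2) * ((∫ x, T x * P x ∂ν) - ∫ x, T x * Q x ∂ν) ^ 2 /
            ((∫ x, T x ^ 2 * P x ∂ν) + ∫ x, T x ^ 2 * Q x ∂ν) ≤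
          ∫ x, (Real.sqrt (P x) - Real.sqrt (Q x)) ^ 2 ∂ν := by
  have h := stmt17_general hPint hQint (.of_forall hP0) (.of_forall hQ0)
  exact ⟨h.1, fun T hT => h.2 T hT.aemeasurable⟩
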